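/- Let 1 ≤ k ≤ N be integers and A : 𝓢(ℝ^k) → 𝓢'(ℝ^k) continuous linear. For each k-tuple j = (j₁,…,j_k) of pairwise distinct elements of {1,…,N} let E_j : 𝓢(ℝ^N) → 𝓢'(ℝ^N) be the unique k-particle extension of A in the variables j₁,…,j_k (characterized on pure tensors by E_j(f₁⊗⋯⊗f_N)(g₁⊗⋯⊗g_N) = A(f_{j₁}⊗⋯⊗f_{j_k})(g_{j₁}⊗⋯⊗g_{j_k})·∏_{m ∉ {j₁,…,j_k}} ∫ f_m g_m). Set C_{k,N} := (k!·binom(N,k))⁻¹ and ε_{k,N}(A) := C_{k,N} · Σ_{j ∈ P_k^N} E_j, the sum over all such tuples. Then: (i) ε_{k,N}(A) maps the bosonic Schwartz space 𝓢_s(ℝ^N) into the bosonic tempered distributions 𝓢'_s(ℝ^N); (ii) if A is skew-adjoint then ε_{k,N}(A) is skew-adjoint; (iii) A ↦ ε_{k,N}(A) is linear and continuous from L(𝓢(ℝ^k),𝓢'(ℝ^k)) to L(𝓢(ℝ^N),𝓢'(ℝ^N)), both spaces carrying the topology of uniform convergence on bounded sets. -/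

import Mathlib

/-!
The extension `E_j` of `A` is only prescribed on pure tensors, so everything rests on two facts.

*Density.* The span of the pure tensors is dense in `𝓢(ℝ^n)` (`dense_tensorSpan`). Measure closeness
in `𝓢` by the sup norm of `(1 + ‖x‖)^m` times the derivatives of order at most `m`, which embeds `𝓢`
into the Banach spaces `E →ᵇ Jet E m` (`weightedJetCLM`). Let `φ` be a product bump function of
small support. In such a Banach space the convolution `f * φ` is the Bochner integral
`∫ f(y) φ(· - y) dy` of translates of `φ`, which are pure tensors, hence it lies in the closed span of
pure tensors; it also equals `∫ φ(y) f(· - y) dy`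
(`integral_smul_weightedJetCLM_comm`, integration by parts), which is close to `f` because
translation is continuous.

By density, identities between separately continuous bilinear forms may be checked on pure
tensors (`ext_tensor`, `DVO.ext_tensor`). This gives uniqueness of extensions, hence linearity of
`A ↦ E_j`; the rule `E_j(π·F)(π·G) = E_{π⁻¹∘j}(F)(G)`, which after summation over `j` gives symmetry of
`ε(A) F` for bosonic `F`; and skew-adjointness of `E_j` for skew-adjoint `A`.

*Slices.* For frozen values `y` of the variables outside `j₁, …, j_k`, let `F_y ∈ 𝓢(ℝ^k)` be the slice
of `F`. Then `E_j F G = ∫ A(F_y)(G_y) dy` (`IsExtension.eq_integral`): both sides agree on pure tensors, and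
the right-hand side is separately continuous by dominated convergence. If `B` is bounded in
`𝓢(ℝ^N)`, the weighted slices `(1 + ‖y‖)^r F_y`, with `F ∈ B` and `y` arbitrary, form a bounded subset
of `𝓢(ℝ^k)`. So for `F ∈ B`, `G ∈ B'` the value `|E_j F G|` is at most a constant times the supremum
of `|A c c'|` over two fixed bounded sets, which is continuity of `A ↦ E_j` for the topologies of
uniform convergence on bounded sets (`continuous_of_isExtension`).
-/

open MeasureTheory SchwartzMap

/-- Distribution-valued operators on `ℝ^n`: continuous linear maps `𝓢(ℝ^n) → 𝓢'(ℝ^n)`. -/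
abbrev DVO (n : ℕ) : Type :=
  SchwartzMap (Fin n → ℝ) ℂ →L[ℂ] (SchwartzMap (Fin n → ℝ) ℂ →L[ℂ] ℂ)

/-- The continuous linear equivalence on `ℝ^k` permuting coordinates: `x ↦ x ∘ π`. -/
noncomputable def permCLE (k : ℕ) (π : Equiv.Perm (Fin k)) : (Fin k → ℝ) ≃L[ℝ] (Fin k → ℝ) :=
  (LinearEquiv.funCongrLeft ℝ ℝ π).toContinuousLinearEquiv

/-- The action of a permutation `π` on Schwartz functions on `ℝ^k`. -/
noncomputable def permCLM (k : ℕ) (π : Equiv.Perm (Fin k)) :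
    SchwartzMap (Fin k → ℝ) ℂ →L[ℂ] SchwartzMap (Fin k → ℝ) ℂ :=
  SchwartzMap.compCLMOfContinuousLinearEquiv ℂ (permCLE k π)

/-- A Schwartz function is bosonic (symmetric) if it is invariant under all permutations of its
arguments. -/
def IsBosonic {k : ℕ} (f : SchwartzMap (Fin k → ℝ) ℂ) : Prop :=
  ∀ (π : Equiv.Perm (Fin k)) (x : Fin k → ℝ), f (x ∘ π) = f x

/-- A tempered distribution `u` is bosonic (symmetric) if `u (π·g) = u g` for all permutations. -/
def IsBosonicDist {k : ℕ} (u : SchwartzMap (Fin k → ℝ) ℂ →L[ℂ] ℂ) : Prop :=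
  ∀ (π : Equiv.Perm (Fin k)) (g : SchwartzMap (Fin k → ℝ) ℂ), u (permCLM k π g) = u g

/-- `F ∈ 𝓢(ℝ^n)` is the pure tensor `f₁ ⊗ ⋯ ⊗ f_n`. -/
def IsTensor {n : ℕ} (f : Fin n → SchwartzMap ℝ ℂ) (F : SchwartzMap (Fin n → ℝ) ℂ) : Prop :=
  ∀ x : Fin n → ℝ, F x = ∏ m, f m (x m)

/-- `fc` is the complex conjugate of the Schwartz function `f`. -/
def IsConjOf {n : ℕ} (f fc : SchwartzMap (Fin n → ℝ) ℂ) : Prop :=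
  ∀ x, fc x = (starRingEnd ℂ) (f x)

/-- `A : 𝓢(ℝ^n) → 𝓢'(ℝ^n)` is skew-adjoint: `(A g)(conj f) = − conj ((A f)(conj g))`. -/
def IsSkewAdjointDVO {n : ℕ} (A : DVO n) : Prop :=
  ∀ f g fc gc : SchwartzMap (Fin n → ℝ) ℂ, IsConjOf f fc → IsConjOf g gc →
    A g fc = - (starRingEnd ℂ) (A f gc)

/-- `E` is the `N`-particle extension `A_{(j₁,…,j_k)}` of the `k`-particle operator `A` in the
(distinct) variables `j₁, …, j_k`. -/
def IsExtension (k N : ℕ) (A : DVO k) (ℓ : Fin k → Fin N) (E : DVO N) : Prop :=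
  ∀ (f g : Fin N → SchwartzMap ℝ ℂ)
    (F G : SchwartzMap (Fin N → ℝ) ℂ) (F' G' : SchwartzMap (Fin k → ℝ) ℂ),
    IsTensor f F → IsTensor g G →
    IsTensor (fun a => f (ℓ a)) F' → IsTensor (fun a => g (ℓ a)) G' →
    E F G = A F' G' * ∏ m ∈ Finset.univ \ Finset.image ℓ Finset.univ, ∫ x : ℝ, f m x * g m x

/-- The normalizing constant `C_{k,N} = (k!·binom(N,k))⁻¹ = 1/(N⋯(N−k+1))`. -/
noncomputable def epsConst (k N : ℕ) : ℂ :=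
  ((Nat.factorial k * Nat.choose N k : ℕ) : ℂ)⁻¹

/-! ### Pure tensors are Schwartz functions -/

/-- Precomposition with an affine map whose linear part has norm at most one does not increase the
norms of derivatives. -/
theorem norm_iteratedFDeriv_comp_affine_le {E F : Type*} [NormedAddCommGroup E] [NormedSpace ℝ E]
    [NormedAddCommGroup F] [NormedSpace ℝ F] (f : 𝓢(F, ℂ)) (L : E →L[ℝ] F) (hL : ‖L‖ ≤ 1)
    (c : F) (n : ℕ) (x : E) :
    ‖iteratedFDeriv ℝ n (fun x => f (L x + c)) x‖ ≤ ‖iteratedFDeriv ℝ n f (L x + c)‖ := by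
  have h1 : (fun x => f (L x + c)) = (fun z => f (z + c)) ∘ L := rfl
  have hs : ContDiff ℝ n (fun z => f (z + c)) := (f.smooth n).comp (contDiff_id.add contDiff_const)
  rw [h1, L.iteratedFDeriv_comp_right hs x le_rfl, iteratedFDeriv_comp_add_right]
  refine (ContinuousMultilinearMap.norm_compContinuousLinearMap_le _ _).trans ?_
  have : ∏ _i : Fin n, ‖L‖ ≤ 1 := Finset.prod_le_one (fun _ _ => norm_nonneg _) (fun _ _ => hL)
  exact mul_le_of_le_one_right (norm_nonneg _) this

theorem exists_one_add_pow_bound {E : Type*} [NormedAddCommGroup E] [NormedSpace ℝ E]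
    (f : 𝓢(E, ℂ)) (k n : ℕ) :
    ∃ C, 0 ≤ C ∧ ∀ x, (1 + ‖x‖) ^ k * ‖iteratedFDeriv ℝ n f x‖ ≤ C := by
  refine ⟨_, ?_, fun x => one_add_le_sup_seminorm_apply (𝕜 := ℂ) (m := (k, n)) le_rfl le_rfl f x⟩
  positivity

theorem exists_isTensor {n : ℕ} (f : Fin n → SchwartzMap ℝ ℂ) :
    ∃ F : SchwartzMap (Fin n → ℝ) ℂ, IsTensor f F := by
  refine ⟨⟨fun x => ∏ m, f m (x m), ?_, ?_⟩, fun x => rfl⟩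
  · exact contDiff_prod fun i _ => ((f i).smooth ⊤).comp (contDiff_apply ℝ ℝ i)
  · intro k l
    choose C hC0 hC using fun (m : Fin n) (p : ℕ) => exists_one_add_pow_bound (f m) k p
    refine ⟨∑ p ∈ (Finset.univ : Finset (Fin n)).sym l, ((p : Multiset (Fin n)).countPerms : ℝ) *
        ∏ j, C j ((p : Multiset (Fin n)).count j), fun x => ?_⟩
    have hx : ‖x‖ ^ k ≤ ∏ j : Fin n, (1 + ‖x j‖) ^ k := by
      rw [Finset.prod_pow]
      refine pow_le_pow_left₀ (norm_nonneg _) ?_ k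
      have h1 : ∀ j : Fin n, 1 ≤ 1 + ‖x j‖ := fun j => by simp
      rw [pi_norm_le_iff_of_nonneg (Finset.prod_nonneg fun j _ => zero_le_one.trans (h1 j))]
      intro i
      rw [← Finset.mul_prod_erase _ _ (Finset.mem_univ i)]
      have h2 : 1 ≤ ∏ j ∈ Finset.univ.erase i, (1 + ‖x j‖) := Finset.one_le_prod (fun j _ => h1 j)
      nlinarith [norm_nonneg (x i)]
    have hD := norm_iteratedFDeriv_prod_le (𝕜 := ℝ) (u := Finset.univ)
      (f := fun (i : Fin n) (x : Fin n → ℝ) => f i (x i)) (N := l) (x := x) (n := l)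
      (fun i _ => ((f i).smooth l).comp (contDiff_apply ℝ ℝ i)) le_rfl
    have hfac : ∀ (i : Fin n) (p : ℕ),
        ‖iteratedFDeriv ℝ p (fun x : Fin n → ℝ => f i (x i)) x‖ ≤ ‖iteratedFDeriv ℝ p (f i) (x i)‖ := by
      intro i p
      have := norm_iteratedFDeriv_comp_affine_le (f i)
        (ContinuousLinearMap.proj (R := ℝ) (φ := fun _ : Fin n => ℝ) i)
        (ContinuousLinearMap.opNorm_le_bound _ zero_le_one
          fun y => by simpa using norm_le_pi_norm y i) 0 p x
      simpa using this
    calc ‖x‖ ^ k * ‖iteratedFDeriv ℝ l (fun x : Fin n → ℝ => ∏ m, f m (x m)) x‖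
        ≤ (∏ j : Fin n, (1 + ‖x j‖) ^ k) * ∑ p ∈ (Finset.univ : Finset (Fin n)).sym l,
          ((p : Multiset (Fin n)).countPerms : ℝ) *
            ∏ j, ‖iteratedFDeriv ℝ ((p : Multiset (Fin n)).count j) (f j) (x j)‖ := by
          refine mul_le_mul hx (hD.trans ?_) (norm_nonneg _) (by positivity)
          gcongr with p hp j hj
          exact hfac _ _
      _ ≤ _ := by
          rw [Finset.mul_sum]
          refine Finset.sum_le_sum fun p _ => ?_
          rw [mul_left_comm, ← Finset.prod_mul_distrib]
          gcongr with j
          exact hC _ _ _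

/-! ### Translations and weighted jets -/

section Density
open scoped LineDeriv BoundedContinuousFunction
open Filter Topology

variable {E : Type*} [NormedAddCommGroup E] [NormedSpace ℝ E]

theorem iteratedFDeriv_compSubConst (g : 𝓢(E, ℂ)) (y x : E) (l : ℕ) :
    iteratedFDeriv ℝ l (g.compSubConstCLM ℂ y) x = iteratedFDeriv ℝ l g (x - y) := by
  have : (g.compSubConstCLM ℂ y : E → ℂ) = fun x => g (x - y) := rfl
  rw [this, iteratedFDeriv_comp_sub]

/-- By the mean value inequality, a small translation moves a Schwartz function by a small amount in
each Schwartz seminorm. -/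
theorem exists_seminorm_compSubConst_sub_le (g : 𝓢(E, ℂ)) (k l : ℕ) :
    ∃ C, 0 ≤ C ∧ ∀ y : E, ‖y‖ ≤ 1 →
      SchwartzMap.seminorm ℂ k l (g.compSubConstCLM ℂ y - g) ≤ C * ‖y‖ := by
  obtain ⟨C, hC0, hC⟩ := exists_one_add_pow_bound g k (l + 1)
  refine ⟨C, hC0, fun y hy => seminorm_le_bound ℂ k l _ (by positivity) fun x => ?_⟩
  have hsub : iteratedFDeriv ℝ l (g.compSubConstCLM ℂ y - g : 𝓢(E, ℂ)) x
      = iteratedFDeriv ℝ l g (x - y) - iteratedFDeriv ℝ l g x := by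
    have h : ((g.compSubConstCLM ℂ y - g : 𝓢(E, ℂ)) : E → ℂ)
        = (g.compSubConstCLM ℂ y : E → ℂ) - (g : E → ℂ) := rfl
    rw [h, iteratedFDeriv_sub_apply (SchwartzMap.contDiffAt _ l) (SchwartzMap.contDiffAt _ l),
      iteratedFDeriv_compSubConst]
  rw [hsub]
  have hdiff : Differentiable ℝ (iteratedFDeriv ℝ l g) :=
    (g.smooth ⊤).differentiable_iteratedFDeriv (mod_cast ENat.natCast_lt_top l)
  have hmv := (convex_segment (𝕜 := ℝ) x (x - y)).norm_image_sub_le_of_norm_hasFDerivWithin_le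
    (f := (‖x‖ ^ k) • iteratedFDeriv ℝ l g)
    (f' := fun z => (‖x‖ ^ k) • fderiv ℝ (iteratedFDeriv ℝ l g) z) (C := C)
    (fun z _ => ((hdiff z).hasFDerivAt.const_smul (‖x‖ ^ k)).hasFDerivWithinAt) ?_
    (left_mem_segment ℝ x (x - y)) (right_mem_segment ℝ x (x - y))
  · rw [Pi.smul_apply, Pi.smul_apply, ← smul_sub, norm_smul] at hmv
    simpa using hmv
  · intro z hz
    rw [norm_smul, norm_fderiv_iteratedFDeriv]
    refine le_trans ?_ (hC z)
    have hxz : ‖x‖ ≤ 1 + ‖z‖ := by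
      obtain ⟨t, ht, rfl⟩ := (segment_eq_image' ℝ x (x - y)) ▸ hz
      have h1 : x = (x + t • (x - y - x)) + t • y := by
        simp
      have h2 : ‖t • y‖ ≤ 1 := by
        rw [norm_smul, Real.norm_of_nonneg ht.1]
        exact mul_le_one₀ ht.2 (norm_nonneg _) hy
      calc ‖x‖ = ‖(x + t • (x - y - x)) + t • y‖ := by rw [← h1]
        _ ≤ _ := norm_add_le _ _
        _ ≤ _ := by linarith
    have : ‖‖x‖ ^ k‖ ≤ (1 + ‖z‖) ^ k := by
      rw [Real.norm_of_nonneg (by positivity)]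
      exact pow_le_pow_left₀ (norm_nonneg _) hxz k
    gcongr

theorem continuous_compSubConst (g : 𝓢(E, ℂ)) :
    Continuous fun y : E => g.compSubConstCLM ℂ y := by
  have h0 : ∀ g : 𝓢(E, ℂ), Tendsto (fun y : E => g.compSubConstCLM ℂ y) (𝓝 0) (𝓝 g) := by
    intro g
    rw [(schwartz_withSeminorms ℂ E ℂ).tendsto_nhds]
    rintro ⟨k, l⟩ ε hε
    obtain ⟨C, hC0, hC⟩ := exists_seminorm_compSubConst_sub_le g k l
    have h1 : Tendsto (fun y : E => C * ‖y‖) (𝓝 0) (𝓝 0) := by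
      have : Continuous fun y : E => C * ‖y‖ := by fun_prop
      simpa using this.tendsto 0
    filter_upwards [h1.eventually (gt_mem_nhds hε), Metric.closedBall_mem_nhds (0 : E) one_pos]
      with y hy1 hy2
    exact (hC y (by simpa using hy2)).trans_lt hy1
  rw [continuous_iff_continuousAt]
  intro y
  have h1 : (fun z : E => g.compSubConstCLM ℂ z)
      = (fun w => (g.compSubConstCLM ℂ y).compSubConstCLM ℂ w) ∘ fun z => z - y := by
    ext z x
    simp
  rw [ContinuousAt, h1]
  have h2 : Tendsto (fun z : E => z - y) (𝓝 y) (𝓝 0) := by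
    have : Continuous fun z : E => z - y := by fun_prop
    simpa using this.tendsto y
  have h3 := (h0 (g.compSubConstCLM ℂ y)).comp h2
  simpa [Function.comp_def] using h3

/-- The space of `l`-th derivatives of functions `E → ℂ`, with its operator norm. It is a type
synonym so that all structure is inherited from a single normed group instance. -/
def DerivSpace (E : Type*) [NormedAddCommGroup E] [NormedSpace ℝ E] (l : ℕ) : Type _ :=
  E [×l]→L[ℝ] ℂ

noncomputable instance (l : ℕ) : NormedAddCommGroup (DerivSpace E l) :=
  inferInstanceAs (NormedAddCommGroup (E [×l]→L[ℝ] ℂ))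

noncomputable instance (l : ℕ) : NormedSpace ℝ (DerivSpace E l) :=
  inferInstanceAs (NormedSpace ℝ (E [×l]→L[ℝ] ℂ))

noncomputable instance (l : ℕ) : NormedSpace ℂ (DerivSpace E l) :=
  inferInstanceAs (NormedSpace ℂ (E [×l]→L[ℝ] ℂ))

instance (l : ℕ) : CompleteSpace (DerivSpace E l) :=
  inferInstanceAs (CompleteSpace (E [×l]→L[ℝ] ℂ))

instance (l : ℕ) : SMulCommClass ℝ ℂ (DerivSpace E l) :=
  inferInstanceAs (SMulCommClass ℝ ℂ (E [×l]→L[ℝ] ℂ))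

instance (l : ℕ) : IsScalarTower ℝ ℂ (DerivSpace E l) :=
  inferInstanceAs (IsScalarTower ℝ ℂ (E [×l]→L[ℝ] ℂ))

/-- The derivatives of orders `0, …, m` at a point. -/
abbrev Jet (E : Type*) [NormedAddCommGroup E] [NormedSpace ℝ E] (m : ℕ) : Type _ :=
  (l : Fin (m + 1)) → DerivSpace E l

/-- The `l`-th derivative of a Schwartz function at a point, as an element of `DerivSpace`. -/
noncomputable def derivAtPoint (l : ℕ) (f : 𝓢(E, ℂ)) (x : E) : DerivSpace E l :=
  iteratedFDeriv ℝ l f x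

theorem norm_derivAtPoint (l : ℕ) (f : 𝓢(E, ℂ)) (x : E) :
    ‖derivAtPoint l f x‖ = ‖iteratedFDeriv ℝ l f x‖ := rfl

theorem derivAtPoint_add (l : ℕ) (f g : 𝓢(E, ℂ)) (x : E) :
    derivAtPoint l (f + g) x = derivAtPoint l f x + derivAtPoint l g x :=
  iteratedFDeriv_add_apply (f.contDiffAt _) (g.contDiffAt _)

theorem derivAtPoint_smul (l : ℕ) (a : ℂ) (f : 𝓢(E, ℂ)) (x : E) :
    derivAtPoint l (a • f) x = a • derivAtPoint l f x :=
  iteratedFDeriv_const_smul_apply (f.contDiffAt _)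

theorem derivAtPoint_compSubConst (l : ℕ) (g : 𝓢(E, ℂ)) (y x : E) :
    derivAtPoint l (g.compSubConstCLM ℂ y) x = derivAtPoint l g (x - y) :=
  iteratedFDeriv_compSubConst g y x l

theorem jet_bound (m : ℕ) (f : 𝓢(E, ℂ)) (x : E) :
    ‖((1 + ‖x‖) ^ m) • (fun l : Fin (m + 1) => derivAtPoint l f x : Jet E m)‖ ≤
      2 ^ m * (Finset.Iic (m, m)).sup (schwartzSeminormFamily ℂ E ℂ) f := by
  rw [norm_smul, Real.norm_of_nonneg (by positivity), ← Real.norm_of_nonneg (r := (1 + ‖x‖) ^ m) (by positivity), ← norm_smul]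
  rw [pi_norm_le_iff_of_nonneg (by positivity)]
  intro l
  rw [Pi.smul_apply, norm_smul, Real.norm_of_nonneg (by positivity)]
  exact one_add_le_sup_seminorm_apply (𝕜 := ℂ) (m := (m, m)) le_rfl (Nat.lt_succ_iff.1 l.2) f x

/-- The function `x ↦ (1 + ‖x‖)^m (f x, …, D^m f x)`, which is bounded and continuous for Schwartz `f`. -/
noncomputable def weightedJet (m : ℕ) (f : 𝓢(E, ℂ)) : E →ᵇ Jet E m :=
  BoundedContinuousFunction.ofNormedAddCommGroup
    (fun x => ((1 + ‖x‖) ^ m) • (fun l : Fin (m + 1) => derivAtPoint l f x : Jet E m))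
    (by
      refine Continuous.smul ((continuous_const.add continuous_norm).pow m) (continuous_pi fun l => ?_)
      exact (f.smooth ⊤).continuous_iteratedFDeriv (mod_cast le_top))
    _ (jet_bound m f)

theorem weightedJet_apply (m : ℕ) (f : 𝓢(E, ℂ)) (x : E) (l : Fin (m + 1)) :
    weightedJet m f x l = ((1 + ‖x‖) ^ m) • derivAtPoint l f x := rfl

/-- `weightedJet m` as a continuous linear map into a Banach space, where Bochner integrals are
available. -/
noncomputable def weightedJetCLM (m : ℕ) : 𝓢(E, ℂ) →L[ℂ] (E →ᵇ Jet E m) :=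
  SchwartzMap.mkCLMtoNormedSpace (σ := RingHom.id ℂ) (G := E →ᵇ Jet E m) (weightedJet m)
    (fun f g => by
      ext x l : 3
      simp only [BoundedContinuousFunction.coe_add, Pi.add_apply, weightedJet_apply]
      rw [derivAtPoint_add, smul_add])
    (fun a f => by
      ext x l : 3
      simp only [BoundedContinuousFunction.coe_smul, Pi.smul_apply, weightedJet_apply]
      rw [derivAtPoint_smul, smul_comm]
      rfl)
    ⟨Finset.Iic (m, m), 2 ^ m, by positivity, fun f =>
      (BoundedContinuousFunction.norm_le (by positivity)).2 (jet_bound m f)⟩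

theorem weightedJetCLM_apply (m : ℕ) (f : 𝓢(E, ℂ)) (x : E) (l : Fin (m + 1)) :
    weightedJetCLM m f x l = ((1 + ‖x‖) ^ m) • derivAtPoint l f x := rfl

theorem seminorm_le_norm_weightedJetCLM {m k l : ℕ} (hk : k ≤ m) (hl : l ≤ m) (f : 𝓢(E, ℂ)) :
    SchwartzMap.seminorm ℂ k l f ≤ ‖weightedJetCLM m f‖ := by
  refine seminorm_le_bound ℂ k l _ (norm_nonneg (weightedJetCLM m f)) fun x => ?_
  have h1 := (norm_le_pi_norm (weightedJetCLM m f x) ⟨l, Nat.lt_succ_of_le hl⟩).trans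
    (BoundedContinuousFunction.norm_coe_le_norm _ x)
  rw [weightedJetCLM_apply, norm_smul, Real.norm_of_nonneg (by positivity)] at h1
  refine le_trans ?_ h1
  rw [norm_derivAtPoint]
  gcongr
  calc ‖x‖ ^ k ≤ (1 + ‖x‖) ^ k := pow_le_pow_left₀ (norm_nonneg _) (by linarith) k
    _ ≤ _ := pow_le_pow_right₀ (by simp) hk

/-- The norms `‖weightedJetCLM m f‖` define the Schwartz topology; this is the half needed for
approximation. -/
theorem mem_closure_of_weightedJetCLM {T : Set 𝓢(E, ℂ)} {f : 𝓢(E, ℂ)}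
    (h : ∀ (m : ℕ) (ε : ℝ), 0 < ε → ∃ g ∈ T, ‖weightedJetCLM m g - weightedJetCLM m f‖ < ε) :
    f ∈ closure T := by
  rw [mem_closure_iff_nhds_basis ((schwartz_withSeminorms ℂ E ℂ).hasBasis_ball (x := f))]
  rintro ⟨s, r⟩ hr
  obtain ⟨m, hm⟩ : ∃ m, ∀ i ∈ s, i.1 ≤ m ∧ i.2 ≤ m :=
    ⟨s.sup fun i => max i.1 i.2, fun i hi => by
      have := Finset.le_sup (f := fun i : ℕ × ℕ => max i.1 i.2) hi
      exact ⟨(le_max_left _ _).trans this, (le_max_right _ _).trans this⟩⟩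
  obtain ⟨g, hg, hlt⟩ := h m r hr
  refine ⟨g, hg, ?_⟩
  rw [Seminorm.mem_ball]
  refine (Seminorm.finset_sup_apply_le (norm_nonneg (weightedJetCLM m (g - f))) ?_).trans_lt
    (by rwa [map_sub])
  intro i hi
  exact seminorm_le_norm_weightedJetCLM (hm i hi).1 (hm i hi).2 _

theorem norm_weightedJetCLM_compSubConst_le (m : ℕ) (g : 𝓢(E, ℂ)) (y : E) :
    ‖weightedJetCLM m (g.compSubConstCLM ℂ y)‖ ≤ (1 + ‖y‖) ^ m * ‖weightedJetCLM m g‖ := by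
  rw [BoundedContinuousFunction.norm_le (by positivity)]
  intro x
  rw [pi_norm_le_iff_of_nonneg (by positivity)]
  intro l
  have h1 := (norm_le_pi_norm (weightedJetCLM m g (x - y)) l).trans
    (BoundedContinuousFunction.norm_coe_le_norm _ (x - y))
  rw [weightedJetCLM_apply, norm_smul, Real.norm_of_nonneg (by positivity)] at h1 ⊢
  rw [derivAtPoint_compSubConst]
  have h2 : 1 + ‖x‖ ≤ (1 + ‖y‖) * (1 + ‖x - y‖) := by
    have : ‖x‖ ≤ ‖x - y‖ + ‖y‖ := by simpa using norm_add_le (x - y) y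
    nlinarith [norm_nonneg y, norm_nonneg (x - y)]
  calc (1 + ‖x‖) ^ m * ‖derivAtPoint l g (x - y)‖
      ≤ ((1 + ‖y‖) * (1 + ‖x - y‖)) ^ m * ‖derivAtPoint l g (x - y)‖ := by gcongr
    _ = (1 + ‖y‖) ^ m * ((1 + ‖x - y‖) ^ m * ‖derivAtPoint l g (x - y)‖) := by
        rw [mul_pow]; ring
    _ ≤ _ := by gcongr

end Density

/-! ### Density of the span of pure tensors -/

section Density2
open scoped LineDeriv BoundedContinuousFunction
open Filter Topology LineDeriv

section
variable {E : Type*} [NormedAddCommGroup E] [NormedSpace ℝ E]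

theorem lineDerivOp_comm (a b : E) (f : 𝓢(E, ℂ)) :
    (∂_{a} (∂_{b} f : 𝓢(E, ℂ)) : 𝓢(E, ℂ)) = ∂_{b} (∂_{a} f : 𝓢(E, ℂ)) := by
  ext x
  have h : ∀ c d : E, (∂_{c} (∂_{d} f : 𝓢(E, ℂ)) : 𝓢(E, ℂ)) x = fderiv ℝ (fderiv ℝ f) x c d := by
    intro c d
    have hd : DifferentiableAt ℝ (fderiv ℝ f) x :=
      ((fderivCLM ℝ E ℂ f).hasFDerivAt x).differentiableAt
    have h1 : ((∂_{d} f : 𝓢(E, ℂ)) : E → ℂ) = fun z => fderiv ℝ f z d := rfl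
    rw [lineDerivOp_apply_eq_fderiv, h1, fderiv_clm_apply hd (differentiableAt_const d)]
    simp
  rw [h, h]
  exact second_derivative_symmetric (fun y => f.hasFDerivAt y)
    ((fderivCLM ℝ E ℂ f).hasFDerivAt x) a b

theorem lineDerivOp_iteratedLineDerivOp_comm (a : E) {l : ℕ} (v : Fin l → E) (f : 𝓢(E, ℂ)) :
    (∂_{a} (∂^{v} f : 𝓢(E, ℂ)) : 𝓢(E, ℂ)) = ∂^{v} (∂_{a} f : 𝓢(E, ℂ)) := by
  induction l with
  | zero => simp
  | succ l ih =>
    rw [iteratedLineDerivOp_succ_left, iteratedLineDerivOp_succ_left, lineDerivOp_comm, ih]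

variable [FiniteDimensional ℝ E] [MeasurableSpace E] [BorelSpace E] (μ : Measure E)
  [μ.IsAddHaarMeasure]

/-- Integration by parts moves a derivative from one factor of a convolution to the other. The sign is
absorbed by the reflection `y ↦ x - y`. -/
theorem integral_mul_lineDerivOp_reflect (f g : 𝓢(E, ℂ)) (x v : E) :
    ∫ y, f y * (∂_{v} g : 𝓢(E, ℂ)) (x - y) ∂μ = ∫ y, (∂_{v} f : 𝓢(E, ℂ)) y * g (x - y) ∂μ := by
  -- the reflected function `y ↦ g (x - y)`
  let r : 𝓢(E, ℂ) := (compCLMOfContinuousLinearEquiv ℂ (ContinuousLinearEquiv.neg ℝ) g).compSubConstCLM ℂ x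
  have hr : ∀ y, r y = g (x - y) := fun y => by
    simp [r]
  have hr' : ∀ y, (∂_{v} r : 𝓢(E, ℂ)) y = - (∂_{v} g : 𝓢(E, ℂ)) (x - y) := fun y => by
    have h1 : (r : E → ℂ) = fun y => g (x - y) := funext hr
    have h2 : HasFDerivAt (fun y : E => x - y) (-(ContinuousLinearMap.id ℝ E)) y := by
      simpa using (hasFDerivAt_id y).const_sub x
    have h3 := (g.hasFDerivAt (x - y)).comp y h2
    rw [lineDerivOp_apply_eq_fderiv, lineDerivOp_apply_eq_fderiv, h1]
    have h4 := h3.fderiv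
    simp only [Function.comp_def] at h4
    rw [h4]
    simp
  have h := integral_mul_lineDerivOp_right_eq_neg_left (μ := μ) f r v
  simp only [hr, hr', mul_neg, integral_neg, neg_inj] at h
  exact h

/-- The derivatives of `f * g` may be computed by differentiating either factor. -/
theorem integral_mul_iteratedFDeriv_reflect (f g : 𝓢(E, ℂ)) (x : E) {l : ℕ} (v : Fin l → E) :
    ∫ y, f y * iteratedFDeriv ℝ l g (x - y) v ∂μ =
      ∫ y, g y * iteratedFDeriv ℝ l f (x - y) v ∂μ := by
  have key : ∀ f g : 𝓢(E, ℂ), ∫ y, f y * (∂^{v} g : 𝓢(E, ℂ)) (x - y) ∂μ =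
      ∫ y, (∂^{v} f : 𝓢(E, ℂ)) y * g (x - y) ∂μ := by
    induction l with
    | zero => intro f g; simp
    | succ l ih =>
      intro f g
      rw [iteratedLineDerivOp_succ_left, integral_mul_lineDerivOp_reflect, ih,
        iteratedLineDerivOp_succ_left, lineDerivOp_iteratedLineDerivOp_comm]
  simp_rw [← iteratedLineDerivOp_eq_iteratedFDeriv]
  rw [key, ← integral_sub_left_eq_self _ μ x]
  simp [mul_comm]

theorem integrable_smul_weightedJetCLM (m : ℕ) (f g : 𝓢(E, ℂ)) :
    Integrable (fun y => f y • weightedJetCLM m (g.compSubConstCLM ℂ y)) μ := by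
  have hcont : Continuous (fun y => f y • weightedJetCLM m (g.compSubConstCLM ℂ y)) :=
    f.continuous.smul ((weightedJetCLM m).continuous.comp (continuous_compSubConst g))
  have hInt : Integrable (fun y => 2 ^ (m - 1) * (‖f y‖ + ‖y‖ ^ m * ‖f y‖) *
      ‖weightedJetCLM m g‖) μ :=
    ((f.integrable.norm.add (f.integrable_pow_mul μ m)).const_mul _).mul_const _
  refine hInt.mono' hcont.aestronglyMeasurable (Eventually.of_forall fun y => ?_)
  rw [norm_smul]
  calc ‖f y‖ * ‖weightedJetCLM m (g.compSubConstCLM ℂ y)‖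
      ≤ ‖f y‖ * ((1 + ‖y‖) ^ m * ‖weightedJetCLM m g‖) := by
        gcongr; exact norm_weightedJetCLM_compSubConst_le m g y
    _ ≤ ‖f y‖ * ((2 ^ (m - 1) * (1 ^ m + ‖y‖ ^ m)) * ‖weightedJetCLM m g‖) := by
        gcongr; exact add_pow_le zero_le_one (norm_nonneg _) m
    _ = _ := by rw [one_pow]; ring

/-- Evaluation of a derivative in given directions. -/
noncomputable def DerivSpace.evalCLM {l : ℕ} (v : Fin l → E) : DerivSpace E l →L[ℝ] ℂ :=
  ContinuousMultilinearMap.apply ℝ (fun _ : Fin l => E) ℂ v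

/-- Commutativity of convolution, as an identity of Bochner integrals of translates in the space of
weighted jets. -/
theorem integral_smul_weightedJetCLM_comm (m : ℕ) (f g : 𝓢(E, ℂ)) :
    ∫ y, f y • weightedJetCLM m (g.compSubConstCLM ℂ y) ∂μ =
      ∫ y, g y • weightedJetCLM m (f.compSubConstCLM ℂ y) ∂μ := by
  refine BoundedContinuousFunction.ext fun x => funext fun l =>
    ContinuousMultilinearMap.ext (f := (_ : E [×(l : ℕ)]→L[ℝ] ℂ)) fun v => ?_
  let ev : (E →ᵇ Jet E m) →L[ℝ] ℂ :=
    (DerivSpace.evalCLM v) ∘L (ContinuousLinearMap.proj (R := ℝ) l) ∘L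
      (BoundedContinuousFunction.evalCLM ℝ x)
  have hev : ∀ h : E →ᵇ Jet E m, ev h = DerivSpace.evalCLM v (h x l) := fun _ => rfl
  have hap : ∀ f g : 𝓢(E, ℂ), 
      DerivSpace.evalCLM v ((∫ y, f y • weightedJetCLM m (g.compSubConstCLM ℂ y) ∂μ) x l) =
      ((1 + ‖x‖) ^ m : ℝ) • ∫ y, f y * iteratedFDeriv ℝ l g (x - y) v ∂μ := by
    intro f g
    rw [← hev, ← ev.integral_comp_comm (integrable_smul_weightedJetCLM μ m f g), ← integral_smul]
    refine integral_congr_ae (Eventually.of_forall fun y => ?_)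
    simp only [hev]
    change f y • ((1 + ‖x‖) ^ m • iteratedFDeriv ℝ l (g.compSubConstCLM ℂ y) x v) = _
    rw [iteratedFDeriv_compSubConst]
    rw [smul_comm, smul_eq_mul]
  exact (hap f g).trans ((by rw [integral_mul_iteratedFDeriv_reflect] : _ = _).trans (hap g f).symm)

end

/-- The span of the pure tensors in `𝓢(ℝ^n)`. -/
noncomputable def tensorSpan (n : ℕ) : Submodule ℂ (SchwartzMap (Fin n → ℝ) ℂ) :=
  Submodule.span ℂ {F | ∃ f, IsTensor f F}

/-- A product of one-dimensional normalized bump functions, supported in a small cube. -/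
theorem exists_tensor_bump (n : ℕ) {δ : ℝ} (hδ : 0 < δ) :
    ∃ (ρ : Fin n → SchwartzMap ℝ ℂ) (φ : SchwartzMap (Fin n → ℝ) ℂ), IsTensor ρ φ ∧
      (∀ y, φ y ≠ 0 → ‖y‖ < δ) ∧ ∫ y, φ y = 1 ∧ ∫ y, ‖φ y‖ = 1 := by
  let b : ContDiffBump (0 : ℝ) := ⟨δ / 2, δ, by positivity, by linarith⟩
  have hcs : HasCompactSupport (fun x : ℝ => (b.normed volume x : ℂ)) :=
    (b.hasCompactSupport_normed (μ := volume)).comp_left (g := fun r : ℝ => (r : ℂ)) (by simp)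
  have hsm : ContDiff ℝ ((⊤ : ℕ∞) : WithTop ℕ∞) (fun x : ℝ => (b.normed volume x : ℂ)) :=
    Complex.ofRealCLM.contDiff.comp (b.contDiff_normed (μ := volume))
  obtain ⟨φ, hφ⟩ := exists_isTensor (fun _ : Fin n => hcs.toSchwartzMap hsm)
  have hval : ∀ y, φ y = ∏ i, (b.normed volume (y i) : ℂ) := hφ
  refine ⟨_, φ, hφ, fun y hy => ?_, ?_, ?_⟩
  · rw [pi_norm_lt_iff hδ]
    intro i
    rw [hval, Finset.prod_ne_zero_iff] at hy
    have h1 : b.normed volume (y i) ≠ 0 := by exact_mod_cast hy i (Finset.mem_univ i)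
    have h2 : y i ∈ Function.support (b.normed volume) := h1
    rw [b.support_normed_eq] at h2
    simpa using h2
  · simp_rw [hval]
    rw [volume_pi, integral_fintype_prod_eq_prod (fun _ : Fin n => fun t : ℝ => (b.normed volume t : ℂ))]
    simp [integral_complex_ofReal, b.integral_normed]
  · have : ∀ y, ‖φ y‖ = ∏ i, b.normed volume (y i) := fun y => by
      rw [hval, norm_prod]
      exact Finset.prod_congr rfl fun i _ => by
        rw [Complex.norm_real, Real.norm_of_nonneg (b.nonneg_normed _)]
    simp_rw [this]
    rw [volume_pi, integral_fintype_prod_eq_prod (fun _ : Fin n => fun t : ℝ => b.normed volume t)]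
    simp [b.integral_normed]

theorem IsTensor.compSubConst {n : ℕ} {f : Fin n → SchwartzMap ℝ ℂ}
    {F : SchwartzMap (Fin n → ℝ) ℂ} (hF : IsTensor f F) (y : Fin n → ℝ) :
    IsTensor (fun i => (f i).compSubConstCLM ℂ (y i)) (F.compSubConstCLM ℂ y) := fun x => by
  simp [hF (x - y)]

theorem dense_tensorSpan (n : ℕ) : Dense (tensorSpan n : Set (SchwartzMap (Fin n → ℝ) ℂ)) := by
  intro f
  refine mem_closure_of_weightedJetCLM fun m ε hε => ?_
  have hc : Continuous fun y : Fin n → ℝ => weightedJetCLM m (f.compSubConstCLM ℂ y) :=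
    (weightedJetCLM m).continuous.comp (continuous_compSubConst f)
  obtain ⟨δ, hδ, hδ'⟩ := Metric.continuousAt_iff.1 (hc.continuousAt (x := 0)) (ε / 2)
    (half_pos hε)
  obtain ⟨ρ, φ, hφ, hsupp, hInt, hnorm⟩ := exists_tensor_bump n hδ
  set w := ∫ y, f y • weightedJetCLM m (φ.compSubConstCLM ℂ y) with hw
  -- `w` lies in the closure of the image of the span
  let S := ((tensorSpan n).map (weightedJetCLM (E := Fin n → ℝ) m).toLinearMap).topologicalClosure
  have hwS : w ∈ S := by
    have hmem : ∀ y, f y • weightedJetCLM m (φ.compSubConstCLM ℂ y) ∈ S := fun y =>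
      S.smul_mem _ (Submodule.le_topologicalClosure _ (Submodule.mem_map_of_mem
        (Submodule.subset_span ⟨_, hφ.compSubConst y⟩)))
    have : CompleteSpace S := (Submodule.isClosed_topologicalClosure _).completeSpace_coe
    have h := LinearIsometry.integral_comp_comm (𝕜 := ℂ) (μ := volume) S.subtypeₗᵢ (fun y => (⟨_, hmem y⟩ : S))
    have h2 : w = S.subtypeₗᵢ (∫ y, (⟨_, hmem y⟩ : S)) := by rw [← h]; rfl
    rw [h2]
    exact Subtype.coe_prop _
  have hwf : ‖w - weightedJetCLM m f‖ ≤ ε / 2 := by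
    have h1 : w - weightedJetCLM m f =
        ∫ y, φ y • (weightedJetCLM m (f.compSubConstCLM ℂ y) - weightedJetCLM m f) := by
      rw [hw, integral_smul_weightedJetCLM_comm]
      simp_rw [smul_sub]
      rw [integral_sub (integrable_smul_weightedJetCLM _ m φ f) (φ.integrable.smul_const _),
        integral_smul_const, hInt, one_smul]
    rw [h1]
    calc _ ≤ ∫ y, ‖φ y‖ * (ε / 2) := by
          refine norm_integral_le_of_norm_le (φ.integrable.norm.mul_const _)
            (Eventually.of_forall fun y => ?_)
          rw [norm_smul]
          by_cases hy : φ y = 0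
          · simp [hy]
          · have := hδ' (show dist y 0 < δ by simpa using hsupp y hy)
            rw [dist_eq_norm] at this
            simp only [compSubConstCLM_zero, ContinuousLinearMap.id_apply] at this
            gcongr
      _ = ε / 2 := by rw [integral_mul_const, hnorm, one_mul]
  have hwc : w ∈ closure ((tensorSpan n).map (weightedJetCLM (E := Fin n → ℝ) m).toLinearMap : Set _) := hwS
  obtain ⟨_, ⟨g, hg, rfl⟩, hgw⟩ := Metric.mem_closure_iff.1 hwc (ε / 2) (half_pos hε)
  refine ⟨g, hg, ?_⟩
  rw [dist_eq_norm, norm_sub_rev] at hgw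
  calc ‖weightedJetCLM m g - weightedJetCLM m f‖
      = ‖(weightedJetCLM m g - w) + (w - weightedJetCLM m f)‖ := by rw [sub_add_sub_cancel]
    _ ≤ _ := norm_add_le _ _
    _ < ε := by
      have : ‖weightedJetCLM m g - w‖ < ε / 2 := hgw
      linarith

end Density2

/-! ### Consequences of density: uniqueness, permutations, conjugation -/

/-- Tempered distributions agreeing on pure tensors are equal. -/
theorem ext_tensor {n : ℕ} {u v : SchwartzMap (Fin n → ℝ) ℂ →L[ℂ] ℂ}
    (h : ∀ f F, IsTensor f F → u F = v F) : u = v :=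
  ContinuousLinearMap.ext_on (dense_tensorSpan n) fun F hF => by
    obtain ⟨f, hf⟩ := hF
    exact h f F hf

/-- Evaluation of a distribution-valued operator at a fixed test function, as a distribution. -/
noncomputable def evalRight {n : ℕ} (E : DVO n) (G : SchwartzMap (Fin n → ℝ) ℂ) :
    SchwartzMap (Fin n → ℝ) ℂ →L[ℂ] ℂ where
  toFun F := E F G
  map_add' F F' := by simp
  map_smul' c F := by simp
  cont := (continuous_eval_const G).comp E.continuous

theorem evalRight_apply {n : ℕ} (E : DVO n) (F G : SchwartzMap (Fin n → ℝ) ℂ) :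
    evalRight E G F = E F G := rfl

/-- Distribution-valued operators agreeing on pairs of pure tensors are equal. -/
theorem DVO.ext_tensor {n : ℕ} {E E' : DVO n}
    (h : ∀ f g F G, IsTensor f F → IsTensor g G → E F G = E' F G) : E = E' := by
  have h1 : ∀ g G, IsTensor g G → evalRight E G = evalRight E' G := fun g G hG =>
    _root_.ext_tensor fun f F hF => h f g F G hF hG
  ext F : 1
  exact _root_.ext_tensor fun g G hG => by
    simpa only [evalRight_apply] using DFunLike.congr_fun (h1 g G hG) F

theorem IsExtension.unique {k N : ℕ} {A : DVO k} {ℓ : Fin k → Fin N} {E E' : DVO N}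
    (h : IsExtension k N A ℓ E) (h' : IsExtension k N A ℓ E') : E = E' :=
  DVO.ext_tensor fun f g F G hF hG => by
    obtain ⟨F', hF'⟩ := exists_isTensor fun a => f (ℓ a)
    obtain ⟨G', hG'⟩ := exists_isTensor fun a => g (ℓ a)
    rw [h f g F G F' G' hF hG hF' hG', h' f g F G F' G' hF hG hF' hG']

theorem IsExtension.add {k N : ℕ} {A B : DVO k} {ℓ : Fin k → Fin N} {E E' : DVO N}
    (h : IsExtension k N A ℓ E) (h' : IsExtension k N B ℓ E') :
    IsExtension k N (A + B) ℓ (E + E') := fun f g F G F' G' hF hG hF' hG' => by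
  simp only [_root_.add_apply, h f g F G F' G' hF hG hF' hG',
    h' f g F G F' G' hF hG hF' hG', add_mul]

theorem IsExtension.smul {k N : ℕ} {A : DVO k} {ℓ : Fin k → Fin N} {E : DVO N} (c : ℂ)
    (h : IsExtension k N A ℓ E) : IsExtension k N (c • A) ℓ (c • E) :=
  fun f g F G F' G' hF hG hF' hG' => by
  simp only [_root_.smul_apply, h f g F G F' G' hF hG hF' hG', smul_eq_mul, mul_assoc]

theorem permCLM_apply {n : ℕ} (π : Equiv.Perm (Fin n)) (F : SchwartzMap (Fin n → ℝ) ℂ)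
    (x : Fin n → ℝ) : permCLM n π F x = F (x ∘ π) := rfl

theorem IsTensor.permCLM {n : ℕ} {f : Fin n → SchwartzMap ℝ ℂ} {F : SchwartzMap (Fin n → ℝ) ℂ}
    (hF : IsTensor f F) (π : Equiv.Perm (Fin n)) :
    IsTensor (fun m => f (π.symm m)) (permCLM n π F) := fun x => by
  rw [permCLM_apply, hF]
  exact Fintype.prod_equiv π _ _ fun m => by simp

/-- Permuting the variables of both arguments of an extension permutes the indices. -/
theorem IsExtension.apply_permCLM {k N : ℕ} {A : DVO k} {ℓ : Fin k → Fin N} {E E' : DVO N}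
    (π : Equiv.Perm (Fin N)) (h : IsExtension k N A ℓ E)
    (h' : IsExtension k N A (fun a => π.symm (ℓ a)) E') (F G : SchwartzMap (Fin N → ℝ) ℂ) :
    E (permCLM N π F) (permCLM N π G) = E' F G := by
  have key : (ContinuousLinearMap.precomp ℂ (permCLM N π)) ∘L E ∘L permCLM N π = E' :=
    DVO.ext_tensor fun f g F G hF hG => by
      obtain ⟨F', hF'⟩ := exists_isTensor fun a => f (π.symm (ℓ a))
      obtain ⟨G', hG'⟩ := exists_isTensor fun a => g (π.symm (ℓ a))
      rw [h' f g F G F' G' hF hG hF' hG']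
      refine (h _ _ _ _ F' G' (hF.permCLM π) (hG.permCLM π) hF' hG').trans ?_
      congr 1
      refine Finset.prod_equiv π.symm (fun m => ?_) fun m _ => rfl
      simp [π.symm.injective.eq_iff]
  rw [← key]
  rfl

/-- Complex conjugation on Schwartz space, as a conjugate-linear continuous map. -/
noncomputable def conjS (n : ℕ) :
    SchwartzMap (Fin n → ℝ) ℂ →L⋆[ℂ] SchwartzMap (Fin n → ℝ) ℂ where
  toFun := SchwartzMap.postcompCLM (𝕜 := ℝ) (Complex.conjCLE : ℂ →L[ℝ] ℂ)
  map_add' f g := map_add _ f g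
  map_smul' c f := by ext x; simp [SchwartzMap.postcompCLM_apply]
  cont := (SchwartzMap.postcompCLM (𝕜 := ℝ) (Complex.conjCLE : ℂ →L[ℝ] ℂ)).continuous

theorem conjS_apply {n : ℕ} (F : SchwartzMap (Fin n → ℝ) ℂ) (x : Fin n → ℝ) :
    conjS n F x = starRingEnd ℂ (F x) := rfl

theorem IsConjOf.eq_conjS {n : ℕ} {f fc : SchwartzMap (Fin n → ℝ) ℂ} (h : IsConjOf f fc) :
    fc = conjS n f := by
  ext x; exact h x

theorem exists_isConjOf (f : SchwartzMap ℝ ℂ) :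
    ∃ fc : SchwartzMap ℝ ℂ, ∀ x, fc x = starRingEnd ℂ (f x) :=
  ⟨SchwartzMap.postcompCLM (𝕜 := ℝ) (Complex.conjCLE : ℂ →L[ℝ] ℂ) f, fun _ => rfl⟩

theorem IsTensor.conjS {n : ℕ} {f fc : Fin n → SchwartzMap ℝ ℂ} {F : SchwartzMap (Fin n → ℝ) ℂ}
    (hF : IsTensor f F) (hfc : ∀ m x, fc m x = starRingEnd ℂ (f m x)) :
    IsTensor fc (conjS n F) := fun x => by
  rw [conjS_apply, hF, map_prod]
  simp only [hfc]

/-- Skew-adjointness is checked on pairs of pure tensors and then extended by density, one argument at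
a time. -/
theorem IsExtension.isSkewAdjointDVO {k N : ℕ} {A : DVO k} {ℓ : Fin k → Fin N} {E : DVO N}
    (h : IsExtension k N A ℓ E) (hA : IsSkewAdjointDVO A) : IsSkewAdjointDVO E := by
  intro F₀ G₀ Fc Gc hFc hGc
  rw [hFc.eq_conjS, hGc.eq_conjS]
  -- conjugation on `ℂ` as a conjugate-linear map
  let c : ℂ →L⋆[ℂ] ℂ := ⟨⟨⟨starRingEnd ℂ, map_add _⟩, fun a b => map_mul _ a b⟩, Complex.continuous_conj⟩
  have tens : ∀ f g F G, IsTensor f F → IsTensor g G →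
      E G (conjS N F) = -starRingEnd ℂ (E F (conjS N G)) := by
    intro f g F G hF hG
    choose fc hfc using fun m => exists_isConjOf (f m)
    choose gc hgc using fun m => exists_isConjOf (g m)
    obtain ⟨F', hF'⟩ := exists_isTensor fun a => f (ℓ a)
    obtain ⟨G', hG'⟩ := exists_isTensor fun a => g (ℓ a)
    rw [h _ _ _ _ _ _ hG (hF.conjS hfc) hG' (hF'.conjS (fun a => hfc (ℓ a))),
      h _ _ _ _ _ _ hF (hG.conjS hgc) hF' (hG'.conjS (fun a => hgc (ℓ a))),
      hA F' G' (conjS k F') (conjS k G') (fun _ => rfl) (fun _ => rfl), map_mul, map_prod, neg_mul]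
    congr 2
    refine Finset.prod_congr rfl fun m _ => ?_
    rw [← integral_conj]
    simp [hfc, hgc, mul_comm]
  have step1 : ∀ f F, IsTensor f F → ∀ G, E G (conjS N F) = -starRingEnd ℂ (E F (conjS N G)) := by
    intro f F hF G
    have := ext_tensor (u := evalRight E (conjS N F)) (v := -(c.comp ((E F).comp (conjS N))))
      fun g G hG => tens f g F G hF hG
    exact DFunLike.congr_fun this G
  have hv := ext_tensor (u := c.comp ((E G₀).comp (conjS N)))
      (v := -(evalRight E (conjS N G₀))) fun f F hF => by
    have := step1 f F hF G₀
    change starRingEnd ℂ (E G₀ (conjS N F)) = - E F (conjS N G₀)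
    rw [this, map_neg, starRingEnd_self_apply]
  have := congrArg (starRingEnd ℂ) (DFunLike.congr_fun hv F₀)
  change starRingEnd ℂ (starRingEnd ℂ (E G₀ (conjS N F₀))) = starRingEnd ℂ (-E F₀ (conjS N G₀)) at this
  rwa [starRingEnd_self_apply, map_neg] at this

/-! ### Slices and continuity in the operator -/

section Slices
open Filter Topology Bornology

/-- The variables that are not among `j₁, …, j_k`. -/
abbrev Rest {k N : ℕ} (j : Fin k ↪ Fin N) : Type :=
  {m : Fin N // m ∈ Finset.univ \ Finset.image j Finset.univ}

/-- Extension of a vector by zero along an injection of index sets, a linear map of norm at most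
one for the sup norms. -/
noncomputable def extendCLM {ι κ : Type*} [Fintype ι] [Fintype κ] (s : ι ↪ κ) :
    (ι → ℝ) →L[ℝ] (κ → ℝ) :=
  (Function.ExtendByZero.linearMap ℝ s).toContinuousLinearMap

theorem extendCLM_apply {ι κ : Type*} [Fintype ι] [Fintype κ] (s : ι ↪ κ) (z : ι → ℝ) (i : ι) :
    extendCLM s z (s i) = z i :=
  s.injective.extend_apply z 0 i

theorem extendCLM_apply_of_notMem {ι κ : Type*} [Fintype ι] [Fintype κ] (s : ι ↪ κ) (z : ι → ℝ)
    {m : κ} (hm : ¬ ∃ i, s i = m) : extendCLM s z m = 0 :=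
  Function.extend_apply' z (0 : κ → ℝ) m hm

theorem norm_extendCLM_le {ι κ : Type*} [Fintype ι] [Fintype κ] (s : ι ↪ κ) :
    ‖extendCLM s‖ ≤ 1 := by
  refine ContinuousLinearMap.opNorm_le_bound _ zero_le_one fun z => ?_
  rw [one_mul, pi_norm_le_iff_of_nonneg (norm_nonneg _)]
  intro m
  by_cases hm : ∃ i, s i = m
  · obtain ⟨i, rfl⟩ := hm
    rw [extendCLM_apply]
    exact norm_le_pi_norm z i
  · rw [extendCLM_apply_of_notMem s z hm]
    simp

variable {k N : ℕ} (j : Fin k ↪ Fin N)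

/-- The point of `ℝ^N` with coordinates `z` in the variables `j₁, …, j_k` and `y` in the others. -/
noncomputable def glue (y : Rest j → ℝ) (z : Fin k → ℝ) : Fin N → ℝ :=
  extendCLM j z + extendCLM (Function.Embedding.subtype _) y

theorem glue_apply_left (y : Rest j → ℝ) (z : Fin k → ℝ) (a : Fin k) : glue j y z (j a) = z a := by
  have h : ¬ ∃ i : Rest j, Function.Embedding.subtype _ i = j a := by
    rintro ⟨⟨i, hi⟩, h⟩
    simp only [Function.Embedding.subtype_apply] at h
    subst h
    simp at hi
  rw [glue, Pi.add_apply, extendCLM_apply, extendCLM_apply_of_notMem _ _ h, add_zero]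

theorem glue_apply_right (y : Rest j → ℝ) (z : Fin k → ℝ) (m : Rest j) : glue j y z m = y m := by
  have h : ¬ ∃ i, j i = m := by
    rintro ⟨i, hi⟩
    have := m.2
    simp [← hi] at this
  rw [glue, Pi.add_apply, extendCLM_apply_of_notMem _ _ h, zero_add]
  exact extendCLM_apply (Function.Embedding.subtype _) y m

theorem norm_left_le_glue (y : Rest j → ℝ) (z : Fin k → ℝ) : ‖z‖ ≤ ‖glue j y z‖ := by
  rw [pi_norm_le_iff_of_nonneg (norm_nonneg _)]
  intro a
  rw [← glue_apply_left j y z a]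
  exact norm_le_pi_norm _ _

theorem norm_right_le_glue (y : Rest j → ℝ) (z : Fin k → ℝ) : ‖y‖ ≤ ‖glue j y z‖ := by
  rw [pi_norm_le_iff_of_nonneg (norm_nonneg _)]
  intro a
  rw [← glue_apply_right j y z a]
  exact norm_le_pi_norm _ _

/-- The slice `z ↦ F (z, y)` of a Schwartz function on `ℝ^N`, for frozen values `y` of the variables
other than `j₁, …, j_k`. -/
noncomputable def slice (y : Rest j → ℝ) :
    SchwartzMap (Fin N → ℝ) ℂ →L[ℂ] SchwartzMap (Fin k → ℝ) ℂ :=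
  SchwartzMap.compCLM ℂ (g := glue j y)
    ((extendCLM j).hasTemperateGrowth.add (.const _))
    ⟨1, 1, fun z => by
      have := norm_left_le_glue j y z
      rw [pow_one, one_mul]; linarith⟩

theorem slice_apply (y : Rest j → ℝ) (F : SchwartzMap (Fin N → ℝ) ℂ) (z : Fin k → ℝ) :
    slice j y F z = F (glue j y z) := rfl

/-- Slices decay in the frozen variables: both the decay in `y` and the decay in `z` of `F (z, y)` are
controlled by powers of the norm of the whole point. -/
theorem seminorm_slice_le (r a b : ℕ) (y : Rest j → ℝ) (F : SchwartzMap (Fin N → ℝ) ℂ) :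
    SchwartzMap.seminorm ℂ a b (((1 + ‖y‖) ^ r : ℝ) • slice j y F) ≤
      2 ^ (a + r) * (Finset.Iic (a + r, b)).sup (schwartzSeminormFamily ℂ (Fin N → ℝ) ℂ) F := by
  refine seminorm_le_bound ℂ a b _ (by positivity) fun z => ?_
  have h1 : iteratedFDeriv ℝ b (((1 + ‖y‖) ^ r : ℝ) • slice j y F : SchwartzMap _ ℂ) z =
      ((1 + ‖y‖) ^ r : ℝ) • iteratedFDeriv ℝ b (slice j y F) z :=
    iteratedFDeriv_const_smul_apply ((slice j y F).contDiffAt _)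
  have h2 : ‖iteratedFDeriv ℝ b (slice j y F) z‖ ≤ ‖iteratedFDeriv ℝ b F (glue j y z)‖ :=
    norm_iteratedFDeriv_comp_affine_le F (extendCLM j) (norm_extendCLM_le j) _ b z
  rw [h1, norm_smul, Real.norm_of_nonneg (by positivity)]
  have hz := norm_left_le_glue j y z
  have hy := norm_right_le_glue j y z
  calc ‖z‖ ^ a * ((1 + ‖y‖) ^ r * ‖iteratedFDeriv ℝ b (slice j y F) z‖)
      ≤ (1 + ‖glue j y z‖) ^ a * ((1 + ‖glue j y z‖) ^ r * ‖iteratedFDeriv ℝ b F (glue j y z)‖) := by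
        gcongr
        linarith
    _ = (1 + ‖glue j y z‖) ^ (a + r) * ‖iteratedFDeriv ℝ b F (glue j y z)‖ := by
        rw [pow_add]; ring
    _ ≤ _ := one_add_le_sup_seminorm_apply (𝕜 := ℂ) (m := (a + r, b)) le_rfl le_rfl F _

/-- The slices of the members of `B`, weighted by `(1 + ‖y‖) ^ r`. -/
def weightedSlices (r : ℕ) (B : Set (SchwartzMap (Fin N → ℝ) ℂ)) :
    Set (SchwartzMap (Fin k → ℝ) ℂ) :=
  {c | ∃ (y : Rest j → ℝ), ∃ F ∈ B, c = ((1 + ‖y‖) ^ r : ℝ) • slice j y F}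

theorem isVonNBounded_weightedSlices (r : ℕ) {B : Set (SchwartzMap (Fin N → ℝ) ℂ)}
    (hB : IsVonNBounded ℂ B) : IsVonNBounded ℂ (weightedSlices j r B) := by
  rw [(schwartz_withSeminorms ℂ (Fin k → ℝ) ℂ).isVonNBounded_iff_seminorm_bounded]
  rintro ⟨a, b⟩
  obtain ⟨c, hc, hc'⟩ := ((schwartz_withSeminorms ℂ (Fin N → ℝ) ℂ).isVonNBounded_iff_finset_seminorm_bounded).1
    hB (Finset.Iic (a + r, b))
  refine ⟨2 ^ (a + r) * c, by positivity, ?_⟩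
  rintro _ ⟨y, F, hF, rfl⟩
  refine (seminorm_slice_le j r a b y F).trans_lt ?_
  have := hc' F hF
  gcongr

theorem continuous_slice (F : SchwartzMap (Fin N → ℝ) ℂ) : Continuous fun y => slice j y F := by
  have h : (fun y => slice j y F) = fun y => slice j 0
      (F.compSubConstCLM ℂ (-(extendCLM (Function.Embedding.subtype _) y))) := by
    ext y z
    simp [slice_apply, glue]
  rw [h]
  exact (slice j 0).continuous.comp ((continuous_compSubConst F).comp
    (extendCLM _).continuous.neg)

theorem IsTensor.slice {f : Fin N → SchwartzMap ℝ ℂ} {F : SchwartzMap (Fin N → ℝ) ℂ}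
    {F' : SchwartzMap (Fin k → ℝ) ℂ} (hF : IsTensor f F) (hF' : IsTensor (fun a => f (j a)) F')
    (y : Rest j → ℝ) : slice j y F = (∏ m : Rest j, f m (y m)) • F' := by
  ext z
  rw [slice_apply, hF, _root_.smul_apply, hF', smul_eq_mul,
    ← Finset.prod_sdiff (Finset.subset_univ (Finset.image j Finset.univ)),
    Finset.prod_image j.injective.injOn]
  simp only [glue_apply_left]
  rw [← Finset.prod_coe_sort]
  simp only [glue_apply_right]

/-- A continuous operator `𝓢 → 𝓢'` defines a jointly sequentially continuous bilinear form. -/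
theorem tendsto_apply_apply {n : ℕ} (A : DVO n) {s t : ℕ → SchwartzMap (Fin n → ℝ) ℂ}
    {f g : SchwartzMap (Fin n → ℝ) ℂ} (hs : Tendsto s atTop (𝓝 f)) (ht : Tendsto t atTop (𝓝 g)) :
    Tendsto (fun i => A (s i) (t i)) atTop (𝓝 (A f g)) := by
  have h1 : Tendsto (fun i => A (s i) - A f) atTop (𝓝 0) := by
    have := (A.continuous.tendsto f).comp hs
    simpa [Function.comp_def] using this.sub_const (A f)
  have h2 : Tendsto (fun i => (A (s i) - A f) (t i)) atTop (𝓝 0) := by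
    rw [tendsto_def]
    intro U hU
    have := h1.eventually (ContinuousLinearMap.eventually_nhds_zero_mapsTo
      (ht.isVonNBounded_range ℂ) hU)
    filter_upwards [this] with i hi
    exact hi (Set.mem_range_self i)
  have h3 : Tendsto (fun i => A f (t i)) atTop (𝓝 (A f g)) := ((A f).continuous.tendsto g).comp ht
  simpa using h2.add h3

theorem continuous_apply_slice (A : DVO k) (F G : SchwartzMap (Fin N → ℝ) ℂ) :
    Continuous fun y => A (slice j y F) (slice j y G) :=
  SeqContinuous.continuous fun _ _ hu => tendsto_apply_apply A
    (((continuous_slice j F).tendsto _).comp hu) (((continuous_slice j G).tendsto _).comp hu)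

/-- The integrable weight used to dominate integrals over the remaining variables. -/
noncomputable def restWeight (y : Rest j → ℝ) : ℝ := ((1 + ‖y‖) ^ (Fintype.card (Rest j) + 1))⁻¹

theorem integrable_restWeight : Integrable (restWeight j) := by
  have h := integrable_one_add_norm (E := Rest j → ℝ) (μ := volume)
    (r := (Fintype.card (Rest j) + 1 : ℕ)) (by simp)
  refine h.congr (Eventually.of_forall fun y => ?_)
  simp only [restWeight]
  rw [Real.rpow_neg (by positivity), Real.rpow_natCast]

/-- The weight is moved into the first argument of `A`, so bounds on weighted slices give integrable
decay in `y`. -/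
theorem norm_apply_slice_le {A : DVO k} {K : ℝ} {B B' : Set (SchwartzMap (Fin N → ℝ) ℂ)}
    (hK : ∀ c ∈ weightedSlices j (Fintype.card (Rest j) + 1) B, ∀ c' ∈ weightedSlices j 0 B',
      ‖A c c'‖ ≤ K) {F G : SchwartzMap (Fin N → ℝ) ℂ} (hF : F ∈ B) (hG : G ∈ B')
    (y : Rest j → ℝ) : ‖A (slice j y F) (slice j y G)‖ ≤ K * restWeight j y := by
  have h := hK _ ⟨y, F, hF, rfl⟩ _ ⟨y, G, hG, rfl⟩
  have hs : A (((1 + ‖y‖) ^ (Fintype.card (Rest j) + 1) : ℝ) • slice j y F) =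
      ((1 + ‖y‖) ^ (Fintype.card (Rest j) + 1) : ℝ) • A (slice j y F) := by
    exact A.map_smul_of_tower _ _
  rw [pow_zero, one_smul, hs, _root_.smul_apply, norm_smul, Real.norm_of_nonneg (by positivity)] at h
  rw [restWeight, ← div_eq_mul_inv, le_div_iff₀ (by positivity), mul_comm]
  exact h

theorem exists_bound_apply {n : ℕ} (A : DVO n) {C C' : Set (SchwartzMap (Fin n → ℝ) ℂ)}
    (hC : IsVonNBounded ℂ C) (hC' : IsVonNBounded ℂ C') :
    ∃ K : ℝ, ∀ c ∈ C, ∀ c' ∈ C', ‖A c c'‖ ≤ K := by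
  have h := ContinuousLinearMap.isVonNBounded_image2_apply (R := ℂ) (hC.image A) hC'
  rw [NormedSpace.isVonNBounded_iff, isBounded_iff_forall_norm_le] at h
  obtain ⟨K, hK⟩ := h
  exact ⟨K, fun c hc c' hc' => hK _ ⟨_, ⟨c, hc, rfl⟩, c', hc', rfl⟩⟩

theorem exists_bound_weightedSlices (A : DVO k) {B B' : Set (SchwartzMap (Fin N → ℝ) ℂ)}
    (hB : IsVonNBounded ℂ B) (hB' : IsVonNBounded ℂ B') :
    ∃ K : ℝ, ∀ c ∈ weightedSlices j (Fintype.card (Rest j) + 1) B, ∀ c' ∈ weightedSlices j 0 B',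
      ‖A c c'‖ ≤ K :=
  exists_bound_apply A (isVonNBounded_weightedSlices j _ hB) (isVonNBounded_weightedSlices j _ hB')

theorem integrable_apply_slice (A : DVO k) (F G : SchwartzMap (Fin N → ℝ) ℂ) :
    Integrable fun y => A (slice j y F) (slice j y G) := by
  obtain ⟨K, hK⟩ := exists_bound_weightedSlices j A
    (isVonNBounded_singleton (𝕜 := ℂ) F) (isVonNBounded_singleton (𝕜 := ℂ) G)
  exact ((integrable_restWeight j).const_mul K).mono'
    (continuous_apply_slice j A F G).aestronglyMeasurable
    (Eventually.of_forall fun y => norm_apply_slice_le j hK rfl rfl y)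

/-- The integral over slices is sequentially continuous: a convergent sequence is bounded, so dominated
convergence applies. -/
theorem tendsto_integral_apply_slice (A : DVO k) {s t : ℕ → SchwartzMap (Fin N → ℝ) ℂ}
    {F G : SchwartzMap (Fin N → ℝ) ℂ} (hs : Tendsto s atTop (𝓝 F)) (ht : Tendsto t atTop (𝓝 G)) :
    Tendsto (fun i => ∫ y, A (slice j y (s i)) (slice j y (t i))) atTop
      (𝓝 (∫ y, A (slice j y F) (slice j y G))) := by
  obtain ⟨K, hK⟩ := exists_bound_weightedSlices j A
    (hs.isVonNBounded_range ℂ) (ht.isVonNBounded_range ℂ)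
  refine tendsto_integral_of_dominated_convergence (fun y => K * restWeight j y)
    (fun i => (continuous_apply_slice j A _ _).aestronglyMeasurable)
    ((integrable_restWeight j).const_mul K)
    (fun i => Eventually.of_forall fun y => norm_apply_slice_le j hK ⟨i, rfl⟩ ⟨i, rfl⟩ y)
    (Eventually.of_forall fun y => tendsto_apply_apply A
      (((slice j y).continuous.tendsto _).comp hs) (((slice j y).continuous.tendsto _).comp ht))

theorem integral_apply_slice_tensor {A : DVO k} {E : DVO N} (h : IsExtension k N A j E)
    {f g : Fin N → SchwartzMap ℝ ℂ} {F G : SchwartzMap (Fin N → ℝ) ℂ} (hF : IsTensor f F)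
    (hG : IsTensor g G) : E F G = ∫ y, A (slice j y F) (slice j y G) := by
  obtain ⟨F', hF'⟩ := exists_isTensor fun a => f (j a)
  obtain ⟨G', hG'⟩ := exists_isTensor fun a => g (j a)
  rw [h f g F G F' G' hF hG hF' hG']
  simp only [hF.slice j hF', hG.slice j hG', map_smul, _root_.smul_apply, smul_eq_mul]
  have h1 : ∀ y : Rest j → ℝ, (∏ m : Rest j, g m (y m)) * ((∏ m : Rest j, f m (y m)) * A F' G') =
      A F' G' * ∏ m : Rest j, (f m (y m) * g m (y m)) := fun y => by
    rw [Finset.prod_mul_distrib]; ring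
  simp_rw [h1]
  rw [integral_const_mul, volume_pi,
    integral_fintype_prod_eq_prod (fun m : Rest j => fun t : ℝ => f m t * g m t),
    Finset.prod_coe_sort _ fun m => ∫ t, f m t * g m t]

/-- The extension of `A` integrates the action of `A` on slices over the remaining variables. -/
theorem IsExtension.eq_integral {A : DVO k} {E : DVO N} (h : IsExtension k N A j E)
    (F G : SchwartzMap (Fin N → ℝ) ℂ) : E F G = ∫ y, A (slice j y F) (slice j y G) := by
  -- the integral as a continuous functional of either argument
  let u (F) : SchwartzMap (Fin N → ℝ) ℂ →L[ℂ] ℂ :=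
    { toFun := fun G => ∫ y, A (slice j y F) (slice j y G)
      map_add' := fun G G' => by
        simp only [map_add]
        exact integral_add (integrable_apply_slice j A F G) (integrable_apply_slice j A F G')
      map_smul' := fun c G => by
        simp only [map_smul, smul_eq_mul, RingHom.id_apply]
        exact integral_const_mul _ _
      cont := SeqContinuous.continuous fun _ _ ht =>
        tendsto_integral_apply_slice j A tendsto_const_nhds ht }
  let v (G) : SchwartzMap (Fin N → ℝ) ℂ →L[ℂ] ℂ :=
    { toFun := fun F => ∫ y, A (slice j y F) (slice j y G)
      map_add' := fun F F' => by
        simp only [map_add, _root_.add_apply]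
        exact integral_add (integrable_apply_slice j A F G) (integrable_apply_slice j A F' G)
      map_smul' := fun c F => by
        simp only [map_smul, _root_.smul_apply, smul_eq_mul, RingHom.id_apply]
        exact integral_const_mul _ _
      cont := SeqContinuous.continuous fun _ _ hs =>
        tendsto_integral_apply_slice j A hs tendsto_const_nhds }
  have h1 : ∀ g G, IsTensor g G → ∀ F, E F G = ∫ y, A (slice j y F) (slice j y G) :=
    fun g G hG F => DFunLike.congr_fun (ext_tensor (u := evalRight E G) (v := v G)
      fun f F hF => integral_apply_slice_tensor j h hF hG) F
  exact DFunLike.congr_fun (ext_tensor (u := E F) (v := u F) fun g G hG => h1 g G hG F) G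

theorem IsExtension.norm_apply_le {A : DVO k} {E : DVO N} (h : IsExtension k N A j E) {K : ℝ}
    {B B' : Set (SchwartzMap (Fin N → ℝ) ℂ)}
    (hK : ∀ c ∈ weightedSlices j (Fintype.card (Rest j) + 1) B, ∀ c' ∈ weightedSlices j 0 B',
      ‖A c c'‖ ≤ K) {F G : SchwartzMap (Fin N → ℝ) ℂ} (hF : F ∈ B) (hG : G ∈ B') :
    ‖E F G‖ ≤ K * ∫ y, restWeight j y := by
  rw [h.eq_integral j, ← integral_const_mul]
  exact norm_integral_le_of_norm_le ((integrable_restWeight j).const_mul K)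
    (Eventually.of_forall fun y => norm_apply_slice_le j hK hF hG y)

-- Instance search does not unify the two additive structures on `DVO n` by itself.
instance (n : ℕ) : ContinuousAdd (DVO n) :=
  ⟨(ContinuousLinearMap.topologicalAddGroup (σ := RingHom.id ℂ) (E := SchwartzMap (Fin n → ℝ) ℂ)
    (F := SchwartzMap (Fin n → ℝ) ℂ →L[ℂ] ℂ)).continuous_add⟩

set_option synthInstance.maxHeartbeats 400000 in
/-- The dependence of the extension on `A` is continuous for uniform convergence on bounded sets. -/
theorem continuous_of_isExtension {T : DVO k → DVO N} (hT : ∀ A, IsExtension k N A j (T A)) :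
    Continuous T := by
  let L : DVO k →+ DVO N := AddMonoidHom.mk' T fun A B => (hT (A + B)).unique ((hT A).add (hT B))
  refine continuous_of_continuousAt_zero L ?_
  rw [ContinuousAt, map_zero]
  refine (ContinuousLinearMap.hasBasis_nhds_zero_of_basis
    (ContinuousLinearMap.hasBasis_nhds_zero_of_basis Metric.nhds_basis_ball)).tendsto_right_iff.2 ?_
  rintro ⟨B, B', ε⟩ ⟨hB, hB', hε⟩
  dsimp only at hB hB' hε
  have hW : 0 ≤ ∫ y, restWeight j y := integral_nonneg fun y => by
    simp only [Pi.zero_apply, restWeight]; positivity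
  set W := ∫ y, restWeight j y
  have hδ : 0 < ε / (W + 1) := by positivity
  filter_upwards [ContinuousLinearMap.eventually_nhds_zero_mapsTo
    (isVonNBounded_weightedSlices j (Fintype.card (Rest j) + 1) hB)
    (ContinuousLinearMap.eventually_nhds_zero_mapsTo (isVonNBounded_weightedSlices j 0 hB')
      (Metric.closedBall_mem_nhds (0 : ℂ) hδ))] with A hA F hF G hG
  have := (hT A).norm_apply_le j (K := ε / (W + 1)) (B := B) (B' := B')
    (fun c hc c' hc' => by simpa using hA hc hc') hF hG
  rw [Metric.mem_ball, dist_zero_right]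
  refine this.trans_lt ?_
  rw [div_mul_eq_mul_div, div_lt_iff₀ (by positivity)]
  nlinarith

end Slices

/-- Let `1 ≤ k ≤ N`, and for each `k`-tuple `j` of pairwise distinct elements of `{1,…,N}`
(i.e. each embedding `j : Fin k ↪ Fin N`) let `ℰ A j` be the `N`-particle extension of `A` in the
variables `j₁,…,j_k`.  Then the map `ε_{k,N}(A) := C_{k,N}·Σ_j ℰ A j` (i) sends bosonic Schwartz
functions to bosonic tempered distributions, (ii) preserves skew-adjointness, and (iii) is linear
and continuous in `A` for the topologies of uniform convergence on bounded sets. -/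
theorem eps_embedding_properties (k N : ℕ) (hk : 0 < k) (hkN : k ≤ N)
    (ℰ : DVO k → (Fin k ↪ Fin N) → DVO N)
    (hℰ : ∀ (A : DVO k) (j : Fin k ↪ Fin N), IsExtension k N A (⇑j) (ℰ A j)) :
    (∀ (A : DVO k) (F : SchwartzMap (Fin N → ℝ) ℂ), IsBosonic F →
      IsBosonicDist ((epsConst k N • ∑ j : Fin k ↪ Fin N, ℰ A j) F)) ∧
    (∀ A : DVO k, IsSkewAdjointDVO A →
      IsSkewAdjointDVO (epsConst k N • ∑ j : Fin k ↪ Fin N, ℰ A j)) ∧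
    (∀ A B : DVO k,
      (epsConst k N • ∑ j : Fin k ↪ Fin N, ℰ (A + B) j)
        = (epsConst k N • ∑ j : Fin k ↪ Fin N, ℰ A j)
          + (epsConst k N • ∑ j : Fin k ↪ Fin N, ℰ B j)) ∧
    (∀ (c : ℂ) (A : DVO k),
      (epsConst k N • ∑ j : Fin k ↪ Fin N, ℰ (c • A) j)
        = c • (epsConst k N • ∑ j : Fin k ↪ Fin N, ℰ A j)) ∧
    Continuous (fun A : DVO k => epsConst k N • ∑ j : Fin k ↪ Fin N, ℰ A j) := by
  have happ : ∀ A F G, (epsConst k N • ∑ j : Fin k ↪ Fin N, ℰ A j) F G =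
      epsConst k N * ∑ j : Fin k ↪ Fin N, ℰ A j F G := fun A F G => by
    simp only [_root_.smul_apply, _root_.sum_apply, smul_eq_mul]
  refine ⟨fun A F hF π G => ?_, fun A hA F G Fc Gc hFc hGc => ?_, fun A B => ?_, fun c A => ?_, ?_⟩
  · have hπF : permCLM N π F = F := by
      ext x
      exact hF π x
    rw [happ, happ]
    congr 1
    -- left multiplication by `π⁻¹` permutes the index tuples
    let e : (Fin k ↪ Fin N) ≃ (Fin k ↪ Fin N) := Equiv.embeddingCongr (Equiv.refl _) π.symm
    refine Fintype.sum_equiv e _ _ fun j => ?_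
    calc ℰ A j F (permCLM N π G) = ℰ A j (permCLM N π F) (permCLM N π G) := by rw [hπF]
      _ = ℰ A (e j) F G := (hℰ A j).apply_permCLM π (hℰ A (e j)) F G
  · rw [happ, happ, map_mul, map_sum, Finset.mul_sum, Finset.mul_sum, ← Finset.sum_neg_distrib]
    refine Finset.sum_congr rfl fun j _ => ?_
    have hc : starRingEnd ℂ (epsConst k N) = epsConst k N := by
      rw [epsConst, map_inv₀, Complex.conj_natCast]
    rw [(hℰ A j).isSkewAdjointDVO hA F G Fc Gc hFc hGc, hc, mul_neg]
  · ext F G : 2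
    have h : ∀ j, ℰ (A + B) j = ℰ A j + ℰ B j := fun j =>
      (hℰ (A + B) j).unique ((hℰ A j).add (hℰ B j))
    rw [_root_.add_apply, _root_.add_apply, happ, happ, happ, ← mul_add, ← Finset.sum_add_distrib]
    simp only [h, _root_.add_apply]
  · ext F G : 2
    have h : ∀ j, ℰ (c • A) j = c • ℰ A j := fun j => (hℰ (c • A) j).unique ((hℰ A j).smul c)
    rw [happ, _root_.smul_apply, _root_.smul_apply, happ, smul_eq_mul, mul_left_comm,
      Finset.mul_sum _ _ c]
    simp only [h, _root_.smul_apply, smul_eq_mul]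
  · exact (continuous_finsetSum _ fun j _ =>
      continuous_of_isExtension j fun A => hℰ A j).const_smul (epsConst k N)
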